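/- arXiv:2309.15841 — 8 statements merged into one kernel-verified Lean document; each statement's English description precedes it below -/
import Mathlib

section
/- Let X be a finite simple bipartite graph with a proper 2-coloring c : V(X) → {true, false}. Let P be the diagonal matrix indexed by the darts of X whose (d,d) entry is +1 if c(tail(d)) = true and −1 otherwise. Then P · (D(X) + M(X)) · P = D(X) − M(X); in particular, the matrices D(X) + M(X) and D(X) − M(X) (over ℝ) are similar. -/
open Matrix

variable {V : Type*} [Fintype V] [DecidableEq V]

/-- The edge adjacency matrix of a graph, indexed by darts:
`M d e = 1` if the head of `d` is the tail of `e` and the tail of `d` is not the head of `e`. -/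
def edgeAdj (R : Type*) [Ring R] (G : SimpleGraph V) [DecidableRel G.Adj] :
    Matrix G.Dart G.Dart R :=
  fun d e => if d.toProd.2 = e.toProd.1 ∧ d.toProd.1 ≠ e.toProd.2 then 1 else 0

/-- The diagonal matrix with `(d,d)` entry `deg(head d) - 1`. -/
def degDiag (R : Type*) [Ring R] (G : SimpleGraph V) [DecidableRel G.Adj] :
    Matrix G.Dart G.Dart R :=
  Matrix.diagonal fun d => (G.degree d.toProd.2 : R) - 1

/-- If `c` is a proper 2-coloring of `X` and `P` is the `±1` diagonal matrix determined by the
color of the tail of each dart, then `P ⬝ (D + M) ⬝ P = D - M`; in particular `D + M` and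
`D - M` are similar. -/
theorem stmt0 (G : SimpleGraph V) [DecidableRel G.Adj]
    (c : V → Bool) (hc : ∀ u v : V, G.Adj u v → c u ≠ c v) :
    (Matrix.diagonal fun d : G.Dart => if c d.toProd.1 then (1 : ℝ) else -1) *
        (degDiag ℝ G + edgeAdj ℝ G) *
        (Matrix.diagonal fun d : G.Dart => if c d.toProd.1 then (1 : ℝ) else -1) =
      degDiag ℝ G - edgeAdj ℝ G := by
  ext d e
  have hd := hc _ _ d.adj
  rw [Matrix.mul_diagonal, Matrix.diagonal_mul, Matrix.add_apply, Matrix.sub_apply]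
  unfold degDiag edgeAdj
  by_cases hde : d = e
  · subst hde
    have hne : d.toProd.2 ≠ d.toProd.1 := d.adj.ne'
    have hn : ¬ (d.toProd.2 = d.toProd.1 ∧ d.toProd.1 ≠ d.toProd.2) := fun h => hne h.1
    rw [Matrix.diagonal_apply_eq, if_neg hn]
    split_ifs <;> ring
  · rw [Matrix.diagonal_apply_ne _ hde]
    by_cases h : d.toProd.2 = e.toProd.1 ∧ d.toProd.1 ≠ e.toProd.2
    · rw [if_pos h]
      rw [h.1] at hd
      cases h1 : c d.toProd.1 <;> cases h2 : c e.toProd.1 <;> simp_all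
    · rw [if_neg h]
      ring
end

section
/- Let X be a finite simple graph whose edge adjacency matrix M = M(X) is irreducible, i.e., for all darts d, e there exists k ≥ 1 with (M^k)_{d,e} ≠ 0. Then X is bipartite if and only if there exists an invertible real matrix S, indexed by the darts of X, such that S⁻¹ · (D(X) + M(X)) · S = D(X) − M(X). -/
open Matrix

variable {V : Type*} [Fintype V] [DecidableEq V]

theorem edgeAdj_row_sum (G : SimpleGraph V) [DecidableRel G.Adj] (d : G.Dart) :
    ∑ e, edgeAdj ℝ G d e = (G.degree d.toProd.2 : ℝ) - 1 := by
  have h1 : ∀ e : G.Dart, (d.toProd.2 = e.toProd.1 ∧ d.toProd.1 ≠ e.toProd.2) ↔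
      e ∈ (Finset.univ.filter (fun x : G.Dart => x.fst = d.snd)).erase d.symm := by
    intro e
    simp only [Finset.mem_erase, Finset.mem_filter, Finset.mem_univ, true_and, ne_eq]
    constructor
    · rintro ⟨h, h'⟩
      refine ⟨?_, h.symm⟩
      rintro rfl
      exact h' rfl
    · rintro ⟨h, h'⟩
      refine ⟨h'.symm, fun h2 => h ?_⟩
      ext
      · exact h'
      · exact h2.symm
  have h2 : ∑ e, edgeAdj ℝ G d e =
      (((Finset.univ.filter (fun x : G.Dart => x.fst = d.snd)).erase d.symm).card : ℝ) := by
    unfold edgeAdj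
    simp only [h1]
    rw [Finset.sum_boole, Finset.filter_mem_eq_inter, Finset.univ_inter]
  have hmem : d.symm ∈ Finset.univ.filter (fun x : G.Dart => x.fst = d.snd) := by
    simp
  rw [h2, Finset.cast_card_erase_of_mem hmem, G.dart_fst_fiber_card_eq_degree]

theorem edgeAdj_ne_zero (G : SimpleGraph V) [DecidableRel G.Adj] (d e : G.Dart) :
    edgeAdj ℝ G d e ≠ 0 ↔ (d.toProd.2 = e.toProd.1 ∧ d.toProd.1 ≠ e.toProd.2) := by
  unfold edgeAdj
  split_ifs with h <;> simp [h]

theorem edgeAdj_symm (G : SimpleGraph V) [DecidableRel G.Adj] {d e : G.Dart}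
    (h : edgeAdj ℝ G d e ≠ 0) : edgeAdj ℝ G e.symm d.symm ≠ 0 := by
  rw [edgeAdj_ne_zero] at *
  exact ⟨h.1.symm, fun h' => h.2 h'.symm⟩

theorem mul_entry_ne {n : Type*} [Fintype n] (A B : Matrix n n ℝ) (d e : n)
    (h : (A * B) d e ≠ 0) : ∃ x, A d x ≠ 0 ∧ B x e ≠ 0 := by
  rw [Matrix.mul_apply] at h
  obtain ⟨x, -, hx⟩ := Finset.exists_ne_zero_of_sum_ne_zero h
  exact ⟨x, left_ne_zero_of_mul hx, right_ne_zero_of_mul hx⟩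

theorem pow_closed {n : Type*} [Fintype n] [DecidableEq n] (A : Matrix n n ℝ) (P : n → Prop)
    (hP : ∀ d e, A d e ≠ 0 → P d → P e) (k : ℕ) :
    ∀ d e, (A ^ k) d e ≠ 0 → P d → P e := by
  induction k with
  | zero =>
    intro d e h hd
    rw [pow_zero] at h
    by_cases hde : d = e
    · exact hde ▸ hd
    · exact absurd (Matrix.one_apply_ne hde) h
  | succ k ih =>
    intro d e h hd
    rw [pow_succ] at h
    obtain ⟨x, h1, h2⟩ := mul_entry_ne _ _ _ _ h
    exact hP x e h2 (ih d x h1 hd)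

theorem no_path_symm (G : SimpleGraph V) [DecidableRel G.Adj]
    (huniq : ∀ a b e : G.Dart, edgeAdj ℝ G a e ≠ 0 → edgeAdj ℝ G b e ≠ 0 → a = b) (k : ℕ) :
    ∀ d : G.Dart, (edgeAdj ℝ G ^ k) d d.symm = 0 := by
  induction k using Nat.strong_induction_on with
  | _ k ih =>
    intro d
    by_contra h
    match k, ih, h with
    | 0, _, h =>
      rw [pow_zero] at h
      exact h (Matrix.one_apply_ne d.symm_ne.symm)
    | 1, _, h =>
      rw [pow_one] at h
      exact ((edgeAdj_ne_zero G _ _).1 h).2 rfl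
    | k + 2, ih, h =>
      rw [pow_succ, pow_succ', ] at h
      obtain ⟨y, h1, h2⟩ := mul_entry_ne _ _ _ _ h
      obtain ⟨x, h3, h4⟩ := mul_entry_ne _ _ _ _ h1
      have := huniq _ _ _ h2 (edgeAdj_symm G h3)
      subst this
      exact h4 (ih k (by omega) x)

theorem coloring_of_kernel (G : SimpleGraph V) [DecidableRel G.Adj]
    (hirr : ∀ d e : G.Dart, ∃ k : ℕ, 1 ≤ k ∧ (edgeAdj ℝ G ^ k) d e ≠ 0)
    (f : G.Dart → ℝ) (hf : f ≠ 0) (hk : (degDiag ℝ G + edgeAdj ℝ G) *ᵥ f = 0) :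
    ∃ c : V → Bool, ∀ u v : V, G.Adj u v → c u ≠ c v := by
  obtain ⟨z, hz⟩ := Function.ne_iff.1 hf
  have : Nonempty G.Dart := ⟨z⟩
  obtain ⟨m, hm⟩ := Finite.exists_max (fun d => |f d|)
  have hprop : ∀ P : G.Dart → Prop, (∀ d e, edgeAdj ℝ G d e ≠ 0 → P d → P e) →
      ∀ d, P d → ∀ e, P e := by
    intro P hP d hd e
    obtain ⟨k, -, hk⟩ := hirr d e
    exact pow_closed _ P hP k d e hk hd
  have hsum : ∀ d, ∑ e, edgeAdj ℝ G d e * (f d * f d + f d * f e) = 0 := by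
    intro d
    have h := congrFun hk d
    rw [Matrix.add_mulVec, Pi.add_apply, degDiag, Matrix.mulVec_diagonal,
      ← edgeAdj_row_sum G d] at h
    simp only [Matrix.mulVec, dotProduct, Pi.zero_apply] at h
    have h2 : ∑ e, edgeAdj ℝ G d e * (f d * f d + f d * f e) =
        f d * ((∑ e, edgeAdj ℝ G d e) * f d + ∑ e, edgeAdj ℝ G d e * f e) := by
      rw [Finset.sum_mul, ← Finset.sum_add_distrib, Finset.mul_sum]
      exact Finset.sum_congr rfl fun e _ => by ring
    rw [h2, h, mul_zero]
  have hm0 : 0 < |f m| := lt_of_lt_of_le (abs_pos.2 hz) (hm z)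
  have hstep : ∀ d e, |f d| = |f m| → edgeAdj ℝ G d e ≠ 0 → f e = - f d := by
    intro d e hd hde
    have hnn : ∀ e ∈ Finset.univ, 0 ≤ edgeAdj ℝ G d e * (f d * f d + f d * f e) := by
      intro e _
      apply mul_nonneg
      · unfold edgeAdj
        split_ifs <;> simp
      · have h1 : |f e| ≤ |f d| := hd ▸ hm e
        have h2 : |f d * f e| ≤ f d * f d := by
          rw [abs_mul, ← abs_mul_abs_self (f d)]
          exact mul_le_mul_of_nonneg_left h1 (abs_nonneg _)
        linarith [neg_abs_le (f d * f e)]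
    have h := (Finset.sum_eq_zero_iff_of_nonneg hnn).1 (hsum d) e (Finset.mem_univ _)
    have h3 := (mul_eq_zero.1 h).resolve_left hde
    have hd0 : f d ≠ 0 := abs_pos.1 (hd ▸ hm0)
    have h4 : f d * (f d + f e) = 0 := by linarith
    linarith [(mul_eq_zero.1 h4).resolve_left hd0]
  have habs : ∀ e, |f e| = |f m| := by
    refine hprop (fun e => |f e| = |f m|) ?_ m rfl
    intro d e hde hd
    rw [hstep d e hd hde, abs_neg, hd]
  have hflip : ∀ d e, edgeAdj ℝ G d e ≠ 0 → f e = - f d := fun d e => hstep d e (habs d)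
  have hne : ∀ e, f e ≠ 0 := fun e => abs_pos.1 (habs e ▸ hm0)
  have hadj : ∀ a b : G.Dart, a.snd = b.snd → a ≠ b → edgeAdj ℝ G a b.symm ≠ 0 := by
    intro a b h hab
    rw [edgeAdj_ne_zero]
    refine ⟨h, fun h' => hab ?_⟩
    ext
    · exact h'
    · exact h
  rcases abs_eq_abs.1 ((habs m.symm).trans (habs m).symm) with hs | hs
  · exfalso
    have hall : ∀ e, f (e.symm) = f e := by
      refine hprop (fun e => f e.symm = f e) ?_ m hs
      intro d e hde hd
      have h1 := hflip _ _ hde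
      have h2 := hflip _ _ (edgeAdj_symm G hde)
      linarith
    have huniq : ∀ a b e : G.Dart, edgeAdj ℝ G a e ≠ 0 → edgeAdj ℝ G b e ≠ 0 → a = b := by
      intro a b e ha hb
      by_contra hab
      have h1 := hflip _ _ ha
      have h2 := hflip _ _ hb
      have h3 := hflip _ _ (hadj a b (((edgeAdj_ne_zero G _ _).1 ha).1.trans
        ((edgeAdj_ne_zero G _ _).1 hb).1.symm) hab)
      rw [hall] at h3
      exact hne a (by linarith)
    obtain ⟨k, -, hk⟩ := hirr m m.symm
    exact hk (no_path_symm G huniq k m)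
  · have hall : ∀ e, f (e.symm) = - f e := by
      refine hprop (fun e => f e.symm = - f e) ?_ m hs
      intro d e hde hd
      have h1 := hflip _ _ hde
      have h2 := hflip _ _ (edgeAdj_symm G hde)
      linarith
    have htail : ∀ a b : G.Dart, a.snd = b.snd → f a = f b := by
      intro a b h
      by_cases hab : a = b
      · rw [hab]
      · have h1 := hflip _ _ (hadj a b h hab)
        rw [hall] at h1
        linarith
    classical
    refine ⟨fun v => decide (∃ d : G.Dart, d.snd = v ∧ 0 < f d), ?_⟩
    intro u v huv
    have key : ∀ d : G.Dart, (∃ x : G.Dart, x.snd = d.snd ∧ 0 < f x) ↔ 0 < f d := by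
      intro d
      constructor
      · rintro ⟨x, hx, hp⟩
        rwa [← htail x d hx]
      · intro h
        exact ⟨d, rfl, h⟩
    let d : G.Dart := ⟨(u, v), huv⟩
    have k1 := key d
    have k2 := key d.symm
    rw [hall] at k2
    change (∃ x : G.Dart, x.snd = v ∧ 0 < f x) ↔ _ at k1
    change (∃ x : G.Dart, x.snd = u ∧ 0 < f x) ↔ _ at k2
    simp only [k1, k2, ne_eq, decide_eq_decide]
    intro h
    rcases lt_or_gt_of_ne (hne d) with h0 | h0
    · linarith [h.1 (by linarith)]
    · linarith [h.2 h0]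

/-- If the edge adjacency matrix `M` of `X` is irreducible, then `X` is bipartite if and only
if `D + M` and `D - M` are similar. -/
theorem stmt1 (G : SimpleGraph V) [DecidableRel G.Adj]
    (hirr : ∀ d e : G.Dart, ∃ k : ℕ, 1 ≤ k ∧ (edgeAdj ℝ G ^ k) d e ≠ 0) :
    (∃ c : V → Bool, ∀ u v : V, G.Adj u v → c u ≠ c v) ↔
      ∃ S : Matrix G.Dart G.Dart ℝ, IsUnit S ∧
        S⁻¹ * (degDiag ℝ G + edgeAdj ℝ G) * S = degDiag ℝ G - edgeAdj ℝ G := by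
  constructor
  · rintro ⟨c, hc⟩
    let s : G.Dart → ℝ := fun d => if c d.toProd.1 then 1 else -1
    have hss : Matrix.diagonal s * Matrix.diagonal s = 1 := by
      rw [Matrix.diagonal_mul_diagonal, ← Matrix.diagonal_one]
      congr 1
      funext d
      by_cases h : c d.toProd.1 <;> simp [s, h]
    refine ⟨Matrix.diagonal s, IsUnit.of_mul_eq_one _ hss, ?_⟩
    rw [Matrix.inv_eq_left_inv hss]
    ext d e
    rw [Matrix.mul_diagonal, Matrix.diagonal_mul, Matrix.add_apply, Matrix.sub_apply]
    have hs2 : s d * s d = 1 := by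
      by_cases h : c d.toProd.1 <;> simp [s, h]
    have hD : s d * degDiag ℝ G d e * s e = degDiag ℝ G d e := by
      unfold degDiag
      by_cases h : d = e
      · subst h
        rw [mul_right_comm, hs2, one_mul]
      · simp [Matrix.diagonal_apply_ne _ h]
    have hM : s d * edgeAdj ℝ G d e * s e = - edgeAdj ℝ G d e := by
      by_cases h : edgeAdj ℝ G d e = 0
      · simp [h]
      · have h1 := ((edgeAdj_ne_zero G d e).1 h).1
        have h2 := hc _ _ d.adj
        rw [h1] at h2
        have h3 : s d * s e = -1 := by
          simp only [s]
          revert h2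
          cases c d.toProd.1 <;> cases c e.toProd.1 <;> simp
        rw [mul_right_comm, h3]
        ring
    rw [mul_add, add_mul, hD, hM]
    ring
  · rintro ⟨S, hS, h⟩
    have hdet := (Matrix.isUnit_iff_isUnit_det S).1 hS
    by_cases hne : Nonempty G.Dart
    · refine coloring_of_kernel G hirr (S *ᵥ 1) ?_ ?_
      · intro h0
        have h1 := congrArg (fun w => S⁻¹ *ᵥ w) h0
        simp only [Matrix.mulVec_mulVec, Matrix.nonsing_inv_mul S hdet, Matrix.one_mulVec,
          Matrix.mulVec_zero] at h1
        exact one_ne_zero (congrFun h1 hne.some)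
      · have h1 : (degDiag ℝ G + edgeAdj ℝ G) * S = S * (degDiag ℝ G - edgeAdj ℝ G) := by
          rw [← h, mul_assoc, ← mul_assoc, Matrix.mul_nonsing_inv S hdet, one_mul]
        have h2 : (degDiag ℝ G - edgeAdj ℝ G) *ᵥ 1 = 0 := by
          funext d
          rw [Matrix.sub_mulVec, Pi.sub_apply, degDiag, Matrix.mulVec_diagonal]
          have := edgeAdj_row_sum G d
          simp only [Matrix.mulVec, dotProduct, Pi.one_apply, mul_one, this, Pi.zero_apply,
            sub_self]
        rw [Matrix.mulVec_mulVec, h1, ← Matrix.mulVec_mulVec, h2, Matrix.mulVec_zero]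
    · exact ⟨fun _ => true, fun u v huv => absurd ⟨⟨(u, v), huv⟩⟩ hne⟩
end

section
/- Let X be a finite simple graph with edge adjacency matrix M = M(X) (with integer entries). Then M is nilpotent (i.e., M^k = 0 for some k) if and only if X is acyclic (a forest). -/
open Matrix

variable {V : Type*} [Fintype V] [DecidableEq V]

lemma edgeAdj_walk (G : SimpleGraph V) [DecidableRel G.Adj] (k : ℕ) :
    ∀ d e : G.Dart, ((edgeAdj ℤ G) ^ k) d e ≠ 0 →
      ∃ q : G.Walk d.toProd.2 e.toProd.2, q.length = k ∧
        (SimpleGraph.Walk.cons d.adj q).edges.IsChain (· ≠ ·) := by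
  induction k with
  | zero =>
    intro d e h
    have hde : d = e := by
      by_contra hne
      exact h (by simp [Matrix.one_apply, hne])
    subst hde
    exact ⟨SimpleGraph.Walk.nil, rfl, by simp⟩
  | succ k ih =>
    intro d e h
    rw [pow_succ', Matrix.mul_apply] at h
    obtain ⟨f, -, hf⟩ := Finset.exists_ne_zero_of_sum_ne_zero h
    have h1 := left_ne_zero_of_mul hf
    have h2 := right_ne_zero_of_mul hf
    obtain ⟨q, hq, hc⟩ := ih f e h2
    have h3 : d.toProd.2 = f.toProd.1 ∧ d.toProd.1 ≠ f.toProd.2 := by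
      by_contra hn
      exact h1 (by simp only [edgeAdj]; rw [if_neg hn])
    obtain ⟨⟨a, b⟩, hd⟩ := d
    obtain ⟨⟨c, x⟩, hx⟩ := f
    simp only at h3 q hq hc ⊢
    obtain ⟨rfl, h4⟩ := h3
    refine ⟨SimpleGraph.Walk.cons hx q, by simp [hq], ?_⟩
    rw [SimpleGraph.Walk.edges_cons, SimpleGraph.Walk.edges_cons, List.isChain_cons_cons]
    refine ⟨?_, hc⟩
    intro h5
    rw [Sym2.eq_iff] at h5
    rcases h5 with ⟨h6, h7⟩ | ⟨h6, h7⟩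
    · exact hd.ne h6
    · exact h4 h6

lemma edgeAdj_nonneg (G : SimpleGraph V) [DecidableRel G.Adj] (d e : G.Dart) :
    0 ≤ edgeAdj ℤ G d e := by
  unfold edgeAdj; split_ifs <;> simp

lemma edgeAdj_pow_nonneg (G : SimpleGraph V) [DecidableRel G.Adj] (k : ℕ) :
    ∀ d e : G.Dart, 0 ≤ ((edgeAdj ℤ G) ^ k) d e := by
  induction k with
  | zero => intro d e; rw [pow_zero, Matrix.one_apply]; split_ifs <;> simp
  | succ k ih =>
    intro d e
    rw [pow_succ', Matrix.mul_apply]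
    exact Finset.sum_nonneg fun f _ => mul_nonneg (edgeAdj_nonneg G d f) (ih f e)

lemma edgeAdj_succ (G : SimpleGraph V) [DecidableRel G.Adj] (d : G.Dart)
    (q : G.Walk d.toProd.2 d.toProd.1) (h : (SimpleGraph.Walk.cons d.adj q).IsCycle) :
    ∃ f : G.Dart, 0 < edgeAdj ℤ G d f ∧ ∃ q' : G.Walk f.toProd.2 f.toProd.1,
      (SimpleGraph.Walk.cons f.adj q').IsCycle := by
  obtain ⟨⟨u, v⟩, hd⟩ := d
  simp only at q h
  rw [SimpleGraph.Walk.cons_isCycle_iff] at h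
  obtain ⟨hp, he⟩ := h
  cases q with
  | nil => exact absurd rfl hd.ne
  | @cons _ w _ hw q =>
    simp only [SimpleGraph.Walk.edges_cons, List.mem_cons, not_or] at he
    rw [SimpleGraph.Walk.cons_isPath_iff] at hp
    have huw : u ≠ w := by
      rintro rfl
      exact he.1 Sym2.eq_swap
    refine ⟨⟨(v, w), hw⟩, by simp [edgeAdj, huw], q.concat hd, ?_⟩
    rw [SimpleGraph.Walk.cons_isCycle_iff]
    refine ⟨hp.1.concat hp.2 hd, ?_⟩
    simp only [SimpleGraph.Walk.edges_concat, List.concat_eq_append, List.mem_append,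
      List.mem_singleton, not_or]
    exact ⟨fun hm => hp.2 (q.fst_mem_support_of_mem_edges hm), fun hm => he.1 hm.symm⟩

lemma edgeAdj_pow_pos (G : SimpleGraph V) [DecidableRel G.Adj] (k : ℕ) :
    ∀ (d : G.Dart) (q : G.Walk d.toProd.2 d.toProd.1),
      (SimpleGraph.Walk.cons d.adj q).IsCycle → ∃ e, 0 < ((edgeAdj ℤ G) ^ k) d e := by
  induction k with
  | zero => intro d q h; exact ⟨d, by simp⟩
  | succ k ih =>
    intro d q h
    obtain ⟨f, hf, q', hq'⟩ := edgeAdj_succ G d q h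
    obtain ⟨e, he⟩ := ih f q' hq'
    refine ⟨e, ?_⟩
    rw [pow_succ', Matrix.mul_apply]
    exact Finset.sum_pos' (fun g _ => mul_nonneg (edgeAdj_nonneg G d g)
      (edgeAdj_pow_nonneg G k g e)) ⟨f, Finset.mem_univ _, mul_pos hf he⟩

/-- The edge adjacency matrix (with integer entries) is nilpotent if and only if the graph
is a forest. -/
theorem stmt2 (G : SimpleGraph V) [DecidableRel G.Adj] :
    IsNilpotent (edgeAdj ℤ G) ↔ G.IsAcyclic := by
  constructor
  · rintro ⟨k, hk⟩ v c hc
    cases c with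
    | nil => exact hc.ne_nil rfl
    | cons h q =>
      obtain ⟨e, he⟩ := edgeAdj_pow_pos G k ⟨(_, _), h⟩ q hc
      rw [hk] at he
      simp at he
  · intro hG
    refine ⟨Fintype.card V, ?_⟩
    ext d e
    by_contra hne
    obtain ⟨q, hq, hc⟩ := edgeAdj_walk G _ d e hne
    have hp := (hG.isPath_iff_isChain _).2 hc
    have := hp.length_lt
    simp [hq] at this
end

section
/- Let X be a finite tree (a connected acyclic simple graph). Then the characteristic polynomial (over ℚ) of the edge Laplacian N(X) equals ∏_{v ∈ V(X)} (x − (deg(v) − 1))^{deg(v)}. In particular, for each vertex v of X, deg(v) − 1 is an eigenvalue of N(X) with algebraic multiplicity deg(v). -/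
open Matrix Polynomial

variable {V : Type*} [Fintype V] [DecidableEq V]

/-- The edge Laplacian `N = D - M`. -/
def edgeLap (R : Type*) [Ring R] (G : SimpleGraph V) [DecidableRel G.Adj] :
    Matrix G.Dart G.Dart R :=
  degDiag R G - edgeAdj R G

/-- Vertices reached by a path starting with the dart `d`. -/
def beyond (G : SimpleGraph V) (d : G.Dart) : Set V :=
  {w | ∃ p : G.Walk d.toProd.2 w, (SimpleGraph.Walk.cons d.adj p).IsPath}

theorem beyond_ssubset (G : SimpleGraph V) (hacyc : G.IsAcyclic) (d e : G.Dart)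
    (h1 : d.toProd.2 = e.toProd.1) (h2 : d.toProd.1 ≠ e.toProd.2) :
    beyond G e ⊂ beyond G d := by
  obtain ⟨⟨a, b⟩, hab⟩ := d
  obtain ⟨⟨b', c⟩, hbc⟩ := e
  dsimp only at h1 h2
  subst h1
  rw [Set.ssubset_iff_exists]
  refine ⟨?_, b, ⟨.nil, ?_⟩, ?_⟩
  · rintro w ⟨p, hp⟩
    refine ⟨.cons hbc p, ?_⟩
    rw [SimpleGraph.Walk.cons_isPath_iff]
    refine ⟨hp, fun ha => ?_⟩
    have hba : b ≠ a := (G.ne_of_adj hab).symm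
    have ha' : a ∈ p.support := by
      rw [SimpleGraph.Walk.support_cons, List.mem_cons] at ha
      exact ha.resolve_left hba.symm
    have hq : (SimpleGraph.Walk.cons hbc (p.takeUntil a ha')).IsPath := by
      rw [SimpleGraph.Walk.cons_isPath_iff] at hp ⊢
      exact ⟨hp.1.takeUntil ha', fun h => hp.2 (p.support_takeUntil_subset_support ha' h)⟩
    have hr : (SimpleGraph.Walk.cons (SimpleGraph.Adj.symm hab) SimpleGraph.Walk.nil : G.Walk b a).IsPath := by
      simp [SimpleGraph.Walk.cons_isPath_iff, hba]
    have := congrArg (fun q : G.Path b a => q.1.snd) (hacyc.path_unique ⟨_, hq⟩ ⟨_, hr⟩)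
    simp at this
    exact h2 this.symm
  · simpa [SimpleGraph.Walk.cons_isPath_iff] using G.ne_of_adj hab
  · rintro ⟨p, hp⟩
    rw [SimpleGraph.Walk.cons_isPath_iff] at hp
    exact hp.2 p.end_mem_support

theorem det_of_rank {n R : Type*} [Fintype n] [DecidableEq n] [CommRing R] (A : Matrix n n R)
    (b : n → ℕ) (h : ∀ i j, i ≠ j → A i j ≠ 0 → b i < b j) : A.det = ∏ i, A i i := by
  have hb : A.BlockTriangular b := by
    intro i j hij
    by_contra h0
    have hne : i ≠ j := by rintro rfl; exact lt_irrefl _ hij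
    exact absurd (h i j hne h0) (by omega)
  rw [hb.det, ← Finset.prod_fiberwise_of_maps_to (g := b) (t := Finset.univ.image b)
    (fun i _ => Finset.mem_image_of_mem b (Finset.mem_univ i))]
  refine Finset.prod_congr rfl fun k _ => ?_
  have : A.toSquareBlock b k = Matrix.diagonal fun i => A i.1 i.1 := by
    ext i j
    by_cases hij : i = j
    · subst hij; simp [Matrix.toSquareBlock_def]
    · rw [Matrix.diagonal_apply_ne _ hij]
      by_contra h0
      have := h i.1 j.1 (fun h => hij (Subtype.ext h)) h0
      have h1 := i.2
      have h2 := j.2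
      omega
  rw [this, Matrix.det_diagonal]
  exact (Finset.prod_subtype _ (by simp) (fun i => A i i)).symm

/-- For a tree `X`, the characteristic polynomial of the edge Laplacian equals
`∏_{v} (x - (deg v - 1))^(deg v)`; in particular each `deg v - 1` is an eigenvalue of `N`
with algebraic multiplicity `deg v`. -/
theorem stmt4 (G : SimpleGraph V) [DecidableRel G.Adj]
    (hconn : G.Connected) (hacyc : G.IsAcyclic) :
    (edgeLap ℚ G).charpoly = ∏ v : V, (X - C ((G.degree v : ℚ) - 1)) ^ (G.degree v) := by
  have hrank : ∀ d e : G.Dart, d.toProd.2 = e.toProd.1 → d.toProd.1 ≠ e.toProd.2 →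
      (beyond G e).ncard < (beyond G d).ncard := fun d e h1 h2 =>
    Set.ncard_lt_ncard (beyond_ssubset G hacyc d e h1 h2) (Set.toFinite _)
  rw [← Matrix.charpoly_transpose, Matrix.charpoly, det_of_rank _ (fun d => (beyond G d).ncard)]
  · have hdiag : ∀ d : G.Dart, ((edgeLap ℚ G)ᵀ).charmatrix d d =
        X - C ((G.degree d.toProd.2 : ℚ) - 1) := by
      intro d
      have : d.toProd.2 ≠ d.toProd.1 := (G.ne_of_adj d.adj).symm
      simp [Matrix.charmatrix_apply_eq, edgeLap, degDiag, edgeAdj, this]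
    rw [Finset.prod_congr rfl fun d _ => hdiag d,
      ← Finset.prod_fiberwise (Finset.univ : Finset G.Dart) (fun d => d.toProd.2)]
    refine Finset.prod_congr rfl fun v _ => ?_
    rw [← G.dart_fst_fiber_card_eq_degree v]
    rw [Finset.prod_congr rfl (g := fun _ => X - C ((G.degree v : ℚ) - 1)), Finset.prod_const,
      G.dart_fst_fiber_card_eq_degree v]
    · congr 1
      rw [← G.dart_fst_fiber_card_eq_degree v]
      refine Finset.card_bij (fun d _ => d.symm) ?_ ?_ ?_
      · intro d hd; simpa using hd
      · intro d _ e _ h; exact SimpleGraph.Dart.symm_involutive.injective h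
      · intro d hd; exact ⟨d.symm, by simpa using hd, by simp⟩
    · intro d hd
      rw [(Finset.mem_filter.1 hd).2]
  · intro d e hne h0
    rw [Matrix.charmatrix_apply_ne _ _ _ hne] at h0
    have : edgeAdj ℚ G e d ≠ 0 := by
      intro h
      apply h0
      simp [edgeLap, degDiag, h, Matrix.diagonal_apply_ne _ hne.symm]
    unfold edgeAdj at this
    have h := (ite_ne_right_iff.1 this).1
    exact hrank e d h.1 h.2
end

section
/- Let p, q ≥ 1 and let X = K_{p,q} be the complete bipartite graph with parts of sizes p and q. Set u = p + q − 2. Then the characteristic polynomial (over ℚ) of the edge Laplacian N(K_{p,q}) equals x · (x − u) · (x² − u·x + ((p−1)(q−1) − 1))^{(p−1)(q−1)} · (x² − u·x + p(q−1))^{p−1} · (x² − u·x + q(p−1))^{q−1}. (Equivalently, the eigenvalues of N(K_{p,q}) are 0 and u each with multiplicity 1, (u ± √((p−q)² + 4))/2 each with multiplicity (p−1)(q−1), (u ± √((p−q)² + 4(1−q)))/2 each with multiplicity p−1, and (u ± √((p−q)² + 4(1−p)))/2 each with multiplicity q−1.) -/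
open Matrix Polynomial

variable {V : Type*} [Fintype V] [DecidableEq V]

instance (p q : ℕ) : DecidableRel (completeBipartiteGraph (Fin p) (Fin q)).Adj := by
  unfold completeBipartiteGraph
  exact fun a b => instDecidableOr

section helpers
variable {R : Type*} [CommRing R] [IsDomain R] [CharZero R]

/-- `J - I`. -/
def jmat (R : Type*) [CommRing R] (n : ℕ) : Matrix (Fin n) (Fin n) R :=
  fun i j => if i = j then 0 else 1

/-- eigenvector matrix of `J - I`. -/
def pmat (R : Type*) [CommRing R] (n : ℕ) : Matrix (Fin (n+1)) (Fin (n+1)) R :=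
  fun i j => if j = 0 then 1 else (if i = j then 1 else 0) - (if i = 0 then 1 else 0)

def pinv (R : Type*) [CommRing R] (n : ℕ) : Matrix (Fin (n+1)) (Fin (n+1)) R :=
  fun i j => if i = 0 then 1 else (if i = j then ((n:R)+1) else 0) - 1

def evals (R : Type*) [CommRing R] (n : ℕ) : Fin (n+1) → R :=
  fun i => if i = 0 then (n:R) else -1

lemma pmat_mul_pinv (n : ℕ) : pinv R n * pmat R n = ((n:R)+1) • (1 : Matrix _ _ R) := by
  ext i j
  simp only [Matrix.mul_apply, Fin.sum_univ_succ, pmat, pinv, Matrix.smul_apply, Matrix.one_apply]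
  refine Fin.cases ?_ (fun i => ?_) i <;> refine Fin.cases ?_ (fun j => ?_) j <;>
    simp [Fin.succ_ne_zero, (Fin.succ_ne_zero _).symm, sub_mul, mul_sub, Finset.sum_sub_distrib, add_comm]

lemma jmat_mul_pmat (n : ℕ) : jmat R (n+1) * pmat R n = pmat R n * Matrix.diagonal (evals R n) := by
  have hj : jmat R (n+1) = (Matrix.of fun _ _ => 1) - 1 := by
    ext i j; simp only [jmat, Matrix.sub_apply, Matrix.of_apply, Matrix.one_apply]; split_ifs <;> simp
  rw [hj, sub_mul, one_mul]
  ext i j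
  rw [Matrix.mul_diagonal, Matrix.sub_apply]
  simp only [Matrix.mul_apply, Fin.sum_univ_succ, pmat, evals, Matrix.of_apply]
  refine Fin.cases ?_ (fun j => ?_) j <;>
    simp [Fin.succ_ne_zero, (Fin.succ_ne_zero _).symm]

lemma det_pmat_ne (n : ℕ) : (pmat R n).det ≠ 0 := by
  intro h
  have := congrArg Matrix.det (pmat_mul_pinv (R := R) n)
  rw [Matrix.det_mul, h, mul_zero, Matrix.det_smul, Matrix.det_one, mul_one] at this
  exact pow_ne_zero _ (by exact_mod_cast Nat.succ_ne_zero n) this.symm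

open Kronecker in
lemma det_kron (m n : ℕ) (s : R) :
    (s • (1 : Matrix (Fin (m+1) × Fin (n+1)) (Fin (m+1) × Fin (n+1)) R)
      - jmat R (m+1) ⊗ₖ jmat R (n+1)).det =
    (s - m * n) * (s - 1) ^ (m * n) * (s + n) ^ m * (s + m) ^ n := by
  have key : (s • (1 : Matrix (Fin (m+1) × Fin (n+1)) (Fin (m+1) × Fin (n+1)) R)
      - jmat R (m+1) ⊗ₖ jmat R (n+1)) * (pmat R m ⊗ₖ pmat R n) =
      (pmat R m ⊗ₖ pmat R n) * Matrix.diagonal (fun x => s - evals R m x.1 * evals R n x.2) := by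
    have : Matrix.diagonal (fun x : Fin (m+1) × Fin (n+1) => s - evals R m x.1 * evals R n x.2) =
        s • 1 - (Matrix.diagonal (evals R m)) ⊗ₖ (Matrix.diagonal (evals R n)) := by
      rw [Matrix.diagonal_kronecker_diagonal, Matrix.smul_one_eq_diagonal, Matrix.diagonal_sub]
    rw [this, sub_mul, mul_sub, ← Matrix.mul_kronecker_mul, ← Matrix.mul_kronecker_mul,
      jmat_mul_pmat, jmat_mul_pmat]
    simp
  have h2 := congrArg Matrix.det key
  rw [Matrix.det_mul, Matrix.det_mul, mul_comm] at h2
  have hne : (pmat R m ⊗ₖ pmat R n).det ≠ 0 := by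
    rw [Matrix.det_kronecker]
    exact mul_ne_zero (pow_ne_zero _ (det_pmat_ne m)) (pow_ne_zero _ (det_pmat_ne n))
  rw [mul_left_cancel₀ hne h2, Matrix.det_diagonal, Fintype.prod_prod_type]
  simp only [Fin.prod_univ_succ, evals]
  simp [Fin.succ_ne_zero, Finset.prod_mul_distrib, ← pow_mul, mul_pow]
  ring

lemma det_blocks {ι : Type*} [Fintype ι] [DecidableEq ι] (a d : R) (hd : d ≠ 0)
    (B Cm : Matrix ι ι R) :
    (Matrix.fromBlocks (a • 1) B Cm (d • 1)).det = ((a * d) • 1 - B * Cm).det := by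
  have h : Matrix.fromBlocks (a • 1) B Cm (d • 1) * Matrix.fromBlocks (d • 1) 0 (-Cm) 1 =
      Matrix.fromBlocks ((a * d) • 1 - B * Cm) B 0 (d • 1) := by
    rw [Matrix.fromBlocks_multiply]
    congr 1 <;> simp [smul_smul, sub_eq_add_neg, mul_comm]
  have h2 := congrArg Matrix.det h
  rw [Matrix.det_mul, Matrix.det_fromBlocks_zero₁₂, Matrix.det_fromBlocks_zero₂₁,
    Matrix.det_one, mul_one] at h2
  have hne : (d • (1 : Matrix ι ι R)).det ≠ 0 := by
    rw [Matrix.det_smul, Matrix.det_one, mul_one]; exact pow_ne_zero _ hd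
  exact mul_right_cancel₀ hne h2

/-- darts of the complete bipartite graph -/
def dartMap (p q : ℕ) : (Fin p × Fin q) ⊕ (Fin p × Fin q) →
    (completeBipartiteGraph (Fin p) (Fin q)).Dart
  | Sum.inl x => ⟨(Sum.inl x.1, Sum.inr x.2), by simp⟩
  | Sum.inr x => ⟨(Sum.inr x.2, Sum.inl x.1), by simp⟩

lemma dartMap_bij (p q : ℕ) : Function.Bijective (dartMap p q) := by
  constructor
  · rintro (⟨a, b⟩ | ⟨a, b⟩) (⟨c, d⟩ | ⟨c, d⟩) h <;>
      simp [dartMap, SimpleGraph.Dart.ext_iff] at h ⊢ <;> tauto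
  · rintro ⟨⟨a | a, b | b⟩, h⟩
    · simp at h
    · exact ⟨Sum.inl (a, b), rfl⟩
    · exact ⟨Sum.inr (b, a), rfl⟩
    · simp at h

lemma deg_inl (p q : ℕ) (a : Fin p)
    [Fintype ((completeBipartiteGraph (Fin p) (Fin q)).neighborSet (Sum.inl a))] :
    (completeBipartiteGraph (Fin p) (Fin q)).degree (Sum.inl a) = q := by
  have : (completeBipartiteGraph (Fin p) (Fin q)).neighborFinset (Sum.inl a)
      = Finset.univ.map Function.Embedding.inr := by
    ext (x | x) <;> simp
  rw [← SimpleGraph.card_neighborFinset_eq_degree, this]; simp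

lemma deg_inr (p q : ℕ) (a : Fin q)
    [Fintype ((completeBipartiteGraph (Fin p) (Fin q)).neighborSet (Sum.inr a))] :
    (completeBipartiteGraph (Fin p) (Fin q)).degree (Sum.inr a) = p := by
  have : (completeBipartiteGraph (Fin p) (Fin q)).neighborFinset (Sum.inr a)
      = Finset.univ.map Function.Embedding.inl := by
    ext (x | x) <;> simp
  rw [← SimpleGraph.card_neighborFinset_eq_degree, this]; simp

lemma deg_dart_inl (p q : ℕ) (x : Fin p × Fin q) :
    (completeBipartiteGraph (Fin p) (Fin q)).degree (dartMap p q (Sum.inl x)).toProd.2 = p :=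
  deg_inr p q x.2

lemma deg_dart_inr (p q : ℕ) (x : Fin p × Fin q) :
    (completeBipartiteGraph (Fin p) (Fin q)).degree (dartMap p q (Sum.inr x)).toProd.2 = q :=
  deg_inl p q x.1

open Kronecker in
lemma charmat_blocks (p q : ℕ) :
    (Matrix.charmatrix (edgeLap ℚ (completeBipartiteGraph (Fin p) (Fin q)))).submatrix
      (dartMap p q) (dartMap p q) =
    Matrix.fromBlocks ((X - C ((p:ℚ) - 1)) • 1) (jmat ℚ[X] p ⊗ₖ 1)
      (1 ⊗ₖ jmat ℚ[X] q) ((X - C ((q:ℚ) - 1)) • 1) := by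
  ext1 i j
  have inj := (dartMap_bij p q).1
  rcases i with ⟨a, b⟩ | ⟨a, b⟩ <;> rcases j with ⟨c, d⟩ | ⟨c, d⟩ <;>
    rw [Matrix.submatrix_apply, Matrix.charmatrix_apply, Matrix.diagonal_apply] <;>
    simp only [edgeLap, Matrix.sub_apply, degDiag, Matrix.diagonal_apply, inj.eq_iff, edgeAdj,
      deg_dart_inl, deg_dart_inr] <;>
    simp [dartMap, Matrix.one_apply, jmat, Matrix.kronecker_apply] <;>
    first | grind | (split_ifs <;> simp)

end helpers

/-- The characteristic polynomial of the edge Laplacian of the complete bipartite graph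
`K_{p,q}`, encoding its spectrum. -/
theorem stmt5 (p q : ℕ) (hp : 1 ≤ p) (hq : 1 ≤ q) :
    (edgeLap ℚ (completeBipartiteGraph (Fin p) (Fin q))).charpoly =
      X * (X - C ((p : ℚ) + q - 2)) *
        (X ^ 2 - C ((p : ℚ) + q - 2) * X + C (((p : ℚ) - 1) * ((q : ℚ) - 1) - 1)) ^
          ((p - 1) * (q - 1)) *
        (X ^ 2 - C ((p : ℚ) + q - 2) * X + C ((p : ℚ) * ((q : ℚ) - 1))) ^ (p - 1) *
        (X ^ 2 - C ((p : ℚ) + q - 2) * X + C ((q : ℚ) * ((p : ℚ) - 1))) ^ (q - 1) := by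
  obtain ⟨m, rfl⟩ : ∃ m, p = m + 1 := ⟨p - 1, by omega⟩
  obtain ⟨n, rfl⟩ : ∃ n, q = n + 1 := ⟨q - 1, by omega⟩
  have hd : (X - C (((n+1 : ℕ):ℚ) - 1)) ≠ 0 := X_sub_C_ne_zero _
  rw [Matrix.charpoly, ← Matrix.det_submatrix_equiv_self (Equiv.ofBijective _ (dartMap_bij (m+1) (n+1)))]
  have h := charmat_blocks (m+1) (n+1)
  refine (congrArg Matrix.det h).trans ?_
  rw [det_blocks _ _ hd, ← Matrix.mul_kronecker_mul, one_mul, mul_one, det_kron]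
  simp only [Nat.add_sub_cancel]
  have c2 : (C 2 : ℚ[X]) = 2 := rfl
  have e1 : (X - C (((m+1 : ℕ):ℚ) - 1)) * (X - C (((n+1 : ℕ):ℚ) - 1)) - (m:ℚ[X]) * (n:ℚ[X])
     = X * (X - C (((m+1 : ℕ) : ℚ) + (n+1 : ℕ) - 2)) := by
    simp [c2]; ring
  have e2 : (X - C (((m+1 : ℕ):ℚ) - 1)) * (X - C (((n+1 : ℕ):ℚ) - 1)) - 1
     = X ^ 2 - C (((m+1 : ℕ) : ℚ) + (n+1 : ℕ) - 2) * X + C ((((m+1 : ℕ) : ℚ) - 1) * (((n+1 : ℕ) : ℚ) - 1) - 1) := by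
    simp [c2]; ring
  have e3 : (X - C (((m+1 : ℕ):ℚ) - 1)) * (X - C (((n+1 : ℕ):ℚ) - 1)) + (n:ℚ[X])
     = X ^ 2 - C (((m+1 : ℕ) : ℚ) + (n+1 : ℕ) - 2) * X + C (((m+1 : ℕ) : ℚ) * (((n+1 : ℕ) : ℚ) - 1)) := by
    simp [c2]; ring
  have e4 : (X - C (((m+1 : ℕ):ℚ) - 1)) * (X - C (((n+1 : ℕ):ℚ) - 1)) + (m:ℚ[X])
     = X ^ 2 - C (((m+1 : ℕ) : ℚ) + (n+1 : ℕ) - 2) * X + C (((n+1 : ℕ) : ℚ) * (((m+1 : ℕ) : ℚ) - 1)) := by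
    simp [c2]; ring
  rw [e1, e2, e3, e4]
end

section
/- Let k ≥ 2 and let X be a k-regular finite simple graph on n vertices with m edges (so the number of darts is 2m = nk). Then the characteristic polynomial (over ℚ) of the edge Laplacian N(X) equals ((x − k)(x − (k − 2)))^{m − n} · det( ((x − k + 1)² + (k − 1)) · I_n + (x − k + 1) · A ), where A is the adjacency matrix of X (mapped into ℚ[x]) and the determinant is taken over the polynomial ring ℚ[x]. In particular, the eigenvalues of N(X) are k−1±1, each with multiplicity m−n, together with k − 1 − (λ ± √(λ² − 4(k−1)))/2 for each eigenvalue λ of A. -/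
open Matrix Polynomial

variable {V : Type*} [Fintype V] [DecidableEq V]

section Helpers

variable (G : SimpleGraph V) [DecidableRel G.Adj]

/-- Reversal matrix. -/
noncomputable def revM : Matrix G.Dart G.Dart ℚ[X] := fun d e => if d.symm = e then 1 else 0

/-- Head incidence. -/
noncomputable def headM : Matrix G.Dart V ℚ[X] := fun d v => if d.toProd.2 = v then 1 else 0

/-- Tail incidence. -/
noncomputable def tailM : Matrix V G.Dart ℚ[X] := fun v d => if d.toProd.1 = v then 1 else 0

lemma edgeAdj_map : (edgeAdj ℚ G).map C = headM G * tailM G - revM G := by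
  ext1 d e
  have h : d.symm = e ↔ d.toProd.2 = e.toProd.1 ∧ d.toProd.1 = e.toProd.2 := by
    rw [SimpleGraph.Dart.ext_iff, Prod.ext_iff]; rfl
  simp only [Matrix.map_apply, edgeAdj, Matrix.sub_apply, Matrix.mul_apply, headM, tailM, revM, h]
  simp only [mul_ite, mul_one, mul_zero, ← ite_and]
  by_cases h1 : d.toProd.2 = e.toProd.1 <;> by_cases h2 : d.toProd.1 = e.toProd.2 <;>
    simp [h1, h2, ite_and, Ne.symm, eq_comm (a := e.toProd.1)]

lemma rev_mul (B : Matrix G.Dart V ℚ[X]) (d : G.Dart) (v : V) :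
    (revM G * B) d v = B d.symm v := by
  simp [Matrix.mul_apply, revM]

lemma rev_sq : revM G * revM G = 1 := by
  ext1 d e
  rw [Matrix.mul_apply, Finset.sum_eq_single d.symm]
  · simp [revM, Matrix.one_apply]
  · intro b _ hb; simp [revM, Ne.symm hb]
  · simp

lemma sum_darts (f : V → V → ℚ[X]) :
    ∑ d : G.Dart, f d.toProd.1 d.toProd.2 = ∑ u, ∑ w, if G.Adj u w then f u w else 0 := by
  rw [← Fintype.sum_prod_type' (f := fun u w => if G.Adj u w then f u w else 0),
    ← Finset.sum_filter]
  refine Finset.sum_bij (fun d _ => d.toProd) ?_ ?_ ?_ ?_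
  · intro d _; simpa using d.adj
  · intro d _ e _ h; exact SimpleGraph.Dart.ext _ _ h
  · intro p hp; exact ⟨⟨p, by simpa using hp⟩, by simp, rfl⟩
  · intro d _; rfl

lemma tail_head : tailM G * headM G = (G.adjMatrix ℚ).map C := by
  ext1 v w
  simp only [Matrix.mul_apply, tailM, headM]
  rw [sum_darts G (fun a b => (if a = v then 1 else 0) * (if b = w then 1 else 0))]
  simp only [mul_ite, mul_one, mul_zero, Matrix.map_apply, SimpleGraph.adjMatrix_apply]
  rw [Finset.sum_eq_single v, Finset.sum_eq_single w]
  · by_cases h : G.Adj v w <;> simp [h]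
  · intro b _ hb; simp [hb]
  · simp
  · intro b _ hb; simp [hb]
  · simp

lemma tail_rev_head (k : ℕ) (hreg : G.IsRegularOfDegree k) :
    tailM G * (revM G * headM G) = C (k : ℚ) • (1 : Matrix V V ℚ[X]) := by
  ext1 v w
  rw [Matrix.mul_apply]
  simp only [rev_mul]
  have := sum_darts G (fun a b => (if a = v then 1 else 0) * (if a = w then 1 else 0))
  refine Eq.trans this ?_
  rw [Finset.sum_eq_single v]
  · have hd := hreg v
    rw [← SimpleGraph.card_neighborFinset_eq_degree, SimpleGraph.neighborFinset_eq_filter] at hd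
    by_cases h : v = w
    · subst h
      simp [hd]
    · simp [h]
  · intro b _ hb; simp [hb]
  · simp

lemma charmat (a : ℚ) (M : Matrix G.Dart G.Dart ℚ) :
    (a • (1 : Matrix G.Dart G.Dart ℚ) - M).charpoly = ((X - C a) • 1 + M.map C).det := by
  rw [Matrix.charpoly]
  congr 1
  ext1 d e
  by_cases h : d = e
  · subst h; simp [Matrix.charmatrix_apply]; ring
  · simp [Matrix.charmatrix_apply, h]

/-- rational version of reversal -/
def revQ : Matrix G.Dart G.Dart ℚ := fun d e => if d.symm = e then 1 else 0

lemma revQ_map : (revQ G).map C = revM G := by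
  ext1 d e
  simp only [Matrix.map_apply, revQ, revM]
  split_ifs <;> simp

lemma mul_pm (y : ℚ[X]) : (y • 1 - revM G) * (y • 1 + revM G) = (y ^ 2 - 1) • 1 := by
  have := rev_sq G
  simp only [sub_mul, mul_add, this, smul_mul_assoc, mul_smul_comm, one_mul, mul_one]
  rw [sub_smul, one_smul, pow_two, mul_smul, smul_sub]
  abel

/-- orientation sign -/
noncomputable def sgnD (d : G.Dart) : ℚ[X] :=
  if Fintype.equivFin V d.toProd.1 < Fintype.equivFin V d.toProd.2 then 1 else -1

lemma sgn_sq (d : G.Dart) : sgnD G d * sgnD G d = 1 := by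
  unfold sgnD; split_ifs <;> simp

lemma sgn_symm (d : G.Dart) : sgnD G d * sgnD G d.symm = -1 := by
  have hne : Fintype.equivFin V d.toProd.1 ≠ Fintype.equivFin V d.toProd.2 := by
    simpa using d.adj.ne
  have h1 : (d.symm).toProd.1 = d.toProd.2 := rfl
  have h2 : (d.symm).toProd.2 = d.toProd.1 := rfl
  unfold sgnD
  rw [h1, h2]
  rcases lt_or_gt_of_ne hne with h | h
  · simp [h, h.not_gt]
  · simp [h, h.not_gt]

lemma det_pm (y : ℚ[X]) : (y • 1 - revM G).det = (y • 1 + revM G).det := by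
  have hD : Matrix.diagonal (sgnD G) * Matrix.diagonal (sgnD G) = 1 := by
    rw [Matrix.diagonal_mul_diagonal]
    simp [sgn_sq]
  have hd : (Matrix.diagonal (sgnD G)).det * (Matrix.diagonal (sgnD G)).det = 1 := by
    rw [← Matrix.det_mul, hD, Matrix.det_one]
  have h : y • 1 - revM G =
      Matrix.diagonal (sgnD G) * (y • 1 + revM G) * Matrix.diagonal (sgnD G) := by
    ext1 d e
    rw [Matrix.mul_diagonal, Matrix.diagonal_mul]
    simp only [Matrix.sub_apply, Matrix.add_apply, Matrix.smul_apply, Matrix.one_apply, revM,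
      smul_eq_mul]
    have h1 := sgn_sq G d
    have h2 := sgn_symm G d
    by_cases hde : d = e
    · subst hde
      simp [d.symm_ne]
      linear_combination (-y) * h1
    · by_cases hs : d.symm = e
      · subst hs
        simp [hde, h2]
      · simp [hde, hs]
  rw [h, Matrix.det_mul, Matrix.det_mul]
  linear_combination (y • 1 + revM G).det * hd

lemma c_monic (a : ℚ) : ((X - C a) ^ 2 - 1 : ℚ[X]).Monic := by
  have : ((X - C a) ^ 2 - 1 : ℚ[X]) = (X - C (a + 1)) * (X - C (a - 1)) := by
    simp only [C_add, C_sub, C_1]; ring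
  rw [this]
  exact (monic_X_sub_C _).mul (monic_X_sub_C _)

lemma det_plus (a : ℚ) : ((X - C a) • 1 + revM G).det =
    ((X - C a) ^ 2 - 1) ^ G.edgeFinset.card := by
  have hm : ((X - C a) • 1 + revM G).det.Monic := by
    rw [← revQ_map, ← charmat]
    exact Matrix.charpoly_monic _
  have hm2 := (c_monic a).pow G.edgeFinset.card
  have h := congrArg Matrix.det (mul_pm G (X - C a))
  rw [Matrix.det_mul, det_pm, Matrix.det_smul, Matrix.det_one, mul_one,
    SimpleGraph.dart_card_eq_twice_card_edges, mul_comm 2, pow_mul, pow_two] at h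
  rcases mul_self_eq_mul_self_iff.mp h with h | h
  · exact h
  · exfalso
    have := congrArg leadingCoeff h
    rw [leadingCoeff_neg, hm.leadingCoeff, hm2.leadingCoeff] at this
    norm_num at this

lemma sylv (c : ℚ[X]) (A : Matrix G.Dart V ℚ[X]) (B : Matrix V G.Dart ℚ[X]) :
    c ^ Fintype.card V * (c • 1 + A * B).det =
      c ^ Fintype.card G.Dart * (c • 1 + B * A).det := by
  have h := congrArg (Polynomial.eval c) (Matrix.charpoly_mul_comm' (-A) B)
  simpa [Matrix.eval_charpoly, Matrix.smul_one_eq_diagonal] using h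

end Helpers

theorem stmt8 (G : SimpleGraph V) [DecidableRel G.Adj] (k : ℕ) (hk : 2 ≤ k)
    (hreg : G.IsRegularOfDegree k) :
    (edgeLap ℚ G).charpoly =
      ((X - C (k : ℚ)) * (X - C ((k : ℚ) - 2))) ^ (G.edgeFinset.card - Fintype.card V) *
        (((X - C ((k : ℚ) - 1)) ^ 2 + C ((k : ℚ) - 1)) • (1 : Matrix V V ℚ[X]) +
            (X - C ((k : ℚ) - 1)) • (G.adjMatrix ℚ).map C).det := by
  have hL : edgeLap ℚ G = ((k : ℚ) - 1) • 1 - edgeAdj ℚ G := by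
    rw [edgeLap, degDiag, Matrix.smul_one_eq_diagonal]
    congr 2
    ext d
    rw [hreg]
  have hnm : Fintype.card V ≤ G.edgeFinset.card := by
    have h := G.sum_degrees_eq_twice_card_edges
    simp only [hreg.degree_eq, Finset.sum_const, Finset.card_univ, smul_eq_mul] at h
    nlinarith
  rw [hL, charmat, edgeAdj_map]
  have hm := c_monic ((k : ℚ) - 1)
  have hp := det_plus G ((k : ℚ) - 1)
  have hc : (X - C (k : ℚ)) * (X - C ((k : ℚ) - 2)) = (X - C ((k : ℚ) - 1)) ^ 2 - 1 := by
    have : (C 2 : ℚ[X]) = 2 := rfl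
    simp only [C_sub, C_1, this]; ring
  have hpm := mul_pm G (X - C ((k : ℚ) - 1))
  have hk1 : C ((k : ℚ) - 1) = C (k : ℚ) - 1 := by simp
  rw [hc]
  set y : ℚ[X] := X - C ((k : ℚ) - 1) with hy
  have hs := sylv G (y ^ 2 - 1) (headM G) (tailM G * (y • 1 + revM G))
  have e1 : (y ^ 2 - 1) • 1 + headM G * (tailM G * (y • 1 + revM G)) =
      (y • 1 + (headM G * tailM G - revM G)) * (y • 1 + revM G) := by
    rw [← hpm, ← Matrix.mul_assoc, ← add_mul]
    congr 1
    abel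
  have e2 : (y ^ 2 - 1) • 1 + tailM G * (y • 1 + revM G) * headM G =
      (y ^ 2 + C ((k : ℚ) - 1)) • (1 : Matrix V V ℚ[X]) + y • (G.adjMatrix ℚ).map C := by
    rw [Matrix.mul_assoc, Matrix.add_mul, Matrix.mul_add, tail_rev_head G k hreg,
      Matrix.smul_mul, Matrix.one_mul, Matrix.mul_smul, tail_head, hk1]
    simp only [sub_smul, add_smul]
    abel
  rw [e1, e2, Matrix.det_mul, hp, SimpleGraph.dart_card_eq_twice_card_edges] at hs
  have h0 : y ^ 2 - 1 ≠ 0 := hm.ne_zero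
  obtain ⟨r, hr⟩ := Nat.exists_eq_add_of_le hnm
  rw [hr] at hs ⊢
  rw [Nat.add_sub_cancel_left]
  apply mul_left_cancel₀ (pow_ne_zero (Fintype.card V + (Fintype.card V + r)) h0)
  linear_combination hs
end

section
/- Let X be a finite simple graph with edge adjacency matrix M = M(X). Then for all darts d, e of X, M_{d,e} + M_{d,σ(e)} + M_{σ(d),e} + M_{σ(d),σ(e)} equals 1 if the underlying edges of d and e are distinct and share a vertex, and equals 0 otherwise. In other words, the sum of the four blocks of M equals the adjacency matrix of the line graph of X. -/
open Matrix

variable {V : Type*} [Fintype V] [DecidableEq V]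

/-- The sum of the four blocks of the edge adjacency matrix is the adjacency matrix of the
line graph: for darts `d, e`, the sum `M_{d,e} + M_{d,σe} + M_{σd,e} + M_{σd,σe}` is `1`
precisely when the underlying edges of `d` and `e` are distinct and share a vertex,
and `0` otherwise. -/
theorem stmt12 (G : SimpleGraph V) [DecidableRel G.Adj] :
    ∀ d e : G.Dart,
      edgeAdj ℚ G d e + edgeAdj ℚ G d e.symm + edgeAdj ℚ G d.symm e +
          edgeAdj ℚ G d.symm e.symm =
        if d.edge ≠ e.edge ∧
            (d.toProd.2 = e.toProd.1 ∨ d.toProd.2 = e.toProd.2 ∨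
              d.toProd.1 = e.toProd.1 ∨ d.toProd.1 = e.toProd.2)
          then 1 else 0 := by
  rintro ⟨⟨a, b⟩, hd⟩ ⟨⟨c, f⟩, he⟩
  have hab : a ≠ b := hd.ne
  have hcf : c ≠ f := he.ne
  simp only [edgeAdj, SimpleGraph.Dart.symm, SimpleGraph.Dart.edge, Prod.swap, ne_eq,
    Sym2.mk, Sym2.eq_iff, Prod.fst, Prod.snd]
  by_cases h1 : a = c <;> by_cases h2 : a = f <;> by_cases h3 : b = c <;> by_cases h4 : b = f <;>
    simp_all
end

section
/- Let X be a finite simple graph that is acyclic (a forest). Then every principal minor of the edge Laplacian N(X) equals the corresponding principal minor of D(X); that is, for every finite set S of darts of X, the determinant of the principal submatrix of N(X) with rows and columns indexed by S equals ∏_{d ∈ S} (deg(head(d)) − 1). -/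
open Matrix

variable {V : Type*} [Fintype V] [DecidableEq V]

/-- Vertices reachable from the head of a dart after deleting its edge. -/
def branchSet (G : SimpleGraph V) (d : G.Dart) : Set V :=
  {x | (G.deleteEdges {s(d.toProd.1, d.toProd.2)}).Reachable d.toProd.2 x}

theorem branchSet_ssubset (G : SimpleGraph V) (hacyc : G.IsAcyclic) (d e : G.Dart)
    (h1 : d.toProd.2 = e.toProd.1) (h2 : d.toProd.1 ≠ e.toProd.2) :
    branchSet G e ⊂ branchSet G d := by
  obtain ⟨⟨u, v⟩, huv⟩ := d
  obtain ⟨⟨v', w⟩, hvw⟩ := e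
  simp only at h1 h2 huv hvw
  subst h1
  have hv : ¬ (G.deleteEdges {s(v, w)}).Reachable w v := by
    have h := SimpleGraph.isAcyclic_iff_forall_adj_isBridge.1 hacyc hvw
    rw [SimpleGraph.isBridge_iff] at h
    exact fun h' => h h'.symm
  have key : ∀ x, (G.deleteEdges {s(v, w)}).Reachable w x →
      (G.deleteEdges {s(u, v)}).Reachable v x := by
    intro x hx
    have hx' := (SimpleGraph.reachable_iff_reflTransGen _ _).1 hx
    clear hx
    induction hx' with
    | refl =>
      apply SimpleGraph.Adj.reachable
      rw [SimpleGraph.deleteEdges_adj]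
      refine ⟨hvw, ?_⟩
      have := hvw.ne
      simp only [Set.mem_singleton_iff, Sym2.eq_iff]
      rintro (⟨h, h'⟩ | ⟨h, h'⟩)
      · exact this h'.symm
      · exact h2 h'.symm
    | @tail b c hb hbc ih =>
      refine ih.trans (SimpleGraph.Adj.reachable ?_)
      have hbr := (SimpleGraph.reachable_iff_reflTransGen _ _).2 hb
      have hcr := hbr.trans hbc.reachable
      have hbv : b ≠ v := by rintro rfl; exact hv hbr
      have hcv : c ≠ v := by rintro rfl; exact hv hcr
      rw [SimpleGraph.deleteEdges_adj] at hbc ⊢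
      refine ⟨hbc.1, ?_⟩
      simp only [Set.mem_singleton_iff, Sym2.eq_iff]
      rintro (⟨h, h'⟩ | ⟨h, h'⟩)
      · exact hcv h'
      · exact hbv h
  exact ⟨key, fun h => hv (h (SimpleGraph.Reachable.refl v))⟩

/-- For a forest, every principal minor of the edge Laplacian equals the corresponding
principal minor of the diagonal matrix `D`: for any finite set `S` of darts, the determinant
of the principal submatrix of `N` indexed by `S` is `∏_{d ∈ S} (deg(head d) - 1)`. -/
theorem stmt14 (G : SimpleGraph V) [DecidableRel G.Adj] (hacyc : G.IsAcyclic)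
    (S : Finset G.Dart) :
    ((edgeLap ℚ G).submatrix (fun d : {d : G.Dart // d ∈ S} => (d : G.Dart))
        (fun d : {d : G.Dart // d ∈ S} => (d : G.Dart))).det =
      ∏ d ∈ S, ((G.degree d.toProd.2 : ℚ) - 1) := by
  have hlt : ∀ d e : G.Dart, d.toProd.2 = e.toProd.1 ∧ d.toProd.1 ≠ e.toProd.2 →
      (branchSet G e).ncard < (branchSet G d).ncard := fun d e h =>
    Set.ncard_lt_ncard (branchSet_ssubset G hacyc d e h.1 h.2) (Set.toFinite _)
  let b : {d : G.Dart // d ∈ S} → ℤ := fun d => -((branchSet G d.1).ncard : ℤ)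
  have hN : ((edgeLap ℚ G).submatrix (fun d : {d : G.Dart // d ∈ S} => (d : G.Dart))
        (fun d : {d : G.Dart // d ∈ S} => (d : G.Dart))).BlockTriangular b := by
    intro i j hij
    have hne : i.1 ≠ j.1 := by
      intro h
      simp [b, h] at hij
    have hM : ¬ (i.1.toProd.2 = j.1.toProd.1 ∧ i.1.toProd.1 ≠ j.1.toProd.2) := by
      intro h
      have := hlt _ _ h
      simp only [b] at hij
      omega
    simp only [Matrix.submatrix_apply, edgeLap, degDiag, edgeAdj, Matrix.sub_apply]
    rw [Matrix.diagonal_apply_ne _ hne, if_neg hM, sub_zero]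
  have hD : (Matrix.diagonal fun d : {d : G.Dart // d ∈ S} =>
      (G.degree d.1.toProd.2 : ℚ) - 1).BlockTriangular b := Matrix.blockTriangular_diagonal _
  rw [← Finset.prod_coe_sort S (fun d => (G.degree d.toProd.2 : ℚ) - 1), ← Matrix.det_diagonal,
    hN.det, hD.det]
  refine Finset.prod_congr rfl fun k _ => ?_
  congr 1
  ext ⟨i, hi⟩ ⟨j, hj⟩
  have hM : ¬ (i.1.toProd.2 = j.1.toProd.1 ∧ i.1.toProd.1 ≠ j.1.toProd.2) := by
    intro h
    have := hlt _ _ h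
    have hij := hi.trans hj.symm
    simp only [b] at hij
    omega
  simp only [Matrix.toSquareBlock_def, Matrix.of_apply, Matrix.submatrix_apply, edgeLap, degDiag,
    edgeAdj, Matrix.sub_apply]
  rw [if_neg hM, sub_zero]
  simp only [Matrix.diagonal_apply, Subtype.ext_iff]
end
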